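/- arXiv:2502.13799 — 2 statements merged into one kernel-verified Lean document; each statement's English description precedes it below -/
import Mathlib

section
/- Under the assumptions on b below, for every δ ∈ (0,1) and every z ∈ ℝ one has ((|z|−1)₊)² ≤ 2^{m+1} δ^m B^* Φ_δ(z), where (s)₊ = max(s,0) denotes the positive part and Φ_δ(z) = ∫₀^z ∫₀^s 1/b_δ(τ) dτ ds. -/
/-!
Outside `(-1 + δ, 1 - δ)` the truncated mobility takes one of its two boundary values, which are at
most `(2δ)^m B^*`. So `Φ_δ'' = 1/b_δ` is nonnegative everywhere and at least `1/((2δ)^m B^*)` for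
`|τ| ≥ 1 - δ`; integrating twice from `0` shows that `Φ_δ` grows at least quadratically there.
-/

open Set MeasureTheory

section SecondPrimitive

/-- The second primitive of `f` normalized by `F 0 = F' 0 = 0`. The entropy `Φ_δ` is the second
primitive of `1 / b_δ`. -/
noncomputable def secondPrimitive (f : ℝ → ℝ) (z : ℝ) : ℝ :=
  ∫ s in (0 : ℝ)..z, ∫ τ in (0 : ℝ)..s, f τ

variable {f : ℝ → ℝ} {a c : ℝ}

lemma secondPrimitive_comp_neg (f : ℝ → ℝ) (z : ℝ) :
    secondPrimitive (fun τ => f (-τ)) (-z) = secondPrimitive f z := by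
  have primitive_comp_neg (s : ℝ) :
      ∫ τ in (0 : ℝ)..s, f (-τ) = -∫ τ in (0 : ℝ)..(-s), f τ := by
    rw [intervalIntegral.integral_comp_neg, neg_zero, intervalIntegral.integral_symm]
  simp_rw [secondPrimitive, primitive_comp_neg]
  rw [intervalIntegral.integral_neg,
    intervalIntegral.integral_comp_neg (fun s => ∫ τ in (0 : ℝ)..s, f τ), neg_zero, neg_neg,
    intervalIntegral.integral_symm, neg_neg]

lemma mul_sub_le_intervalIntegral (hf : ∀ x y, IntervalIntegrable f volume x y)
    (f_nonneg : ∀ x, 0 ≤ f x) (ha : 0 ≤ a) (le_f : ∀ x, a ≤ x → c ≤ f x) {s : ℝ} (has : a ≤ s) :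
    c * (s - a) ≤ ∫ τ in (0 : ℝ)..s, f τ :=
  calc c * (s - a) = ∫ _ in a..s, c := by
        rw [intervalIntegral.integral_const, smul_eq_mul, mul_comm]
    _ ≤ ∫ τ in a..s, f τ :=
        intervalIntegral.integral_mono_on has (by simp) (hf a s) fun x hx => le_f x hx.1
    _ ≤ ∫ τ in (0 : ℝ)..s, f τ :=
        intervalIntegral.integral_mono_interval ha has le_rfl (.of_forall f_nonneg) (hf 0 s)

lemma mul_sq_max_sub_le_secondPrimitive (hf : ∀ x y, IntervalIntegrable f volume x y)
    (f_nonneg : ∀ x, 0 ≤ f x) (ha : 0 ≤ a) (le_f : ∀ x, a ≤ x → c ≤ f x) {z : ℝ} (hz : 0 ≤ z) :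
    c / 2 * max (z - a) 0 ^ 2 ≤ secondPrimitive f z := by
  set F : ℝ → ℝ := fun s => ∫ τ in (0 : ℝ)..s, f τ
  have hF (x y : ℝ) : IntervalIntegrable F volume x y :=
    (intervalIntegral.continuous_primitive hf 0).intervalIntegrable x y
  have F_nonneg {s : ℝ} (hs : 0 ≤ s) : 0 ≤ F s :=
    intervalIntegral.integral_nonneg hs fun x _ => f_nonneg x
  rcases le_total z a with hza | haz
  · rw [max_eq_right (by linarith), zero_pow two_ne_zero, mul_zero]
    exact intervalIntegral.integral_nonneg hz fun s hs => F_nonneg hs.1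
  · rw [max_eq_left (by linarith)]
    calc c / 2 * (z - a) ^ 2 = ∫ s in a..z, c * (s - a) := by
          rw [intervalIntegral.integral_const_mul,
            intervalIntegral.integral_comp_sub_right (fun s => s), integral_id]
          ring
      _ ≤ ∫ s in a..z, F s :=
          intervalIntegral.integral_mono_on haz
            (Continuous.intervalIntegrable (by fun_prop) _ _) (hF a z)
            fun s hs => mul_sub_le_intervalIntegral hf f_nonneg ha le_f hs.1
      _ ≤ ∫ s in (0 : ℝ)..z, F s :=
          intervalIntegral.integral_mono_interval ha haz le_rfl
            ((ae_restrict_mem measurableSet_Ioc).mono fun _ hs => F_nonneg hs.1.le) (hF 0 z)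

lemma mul_sq_max_abs_sub_le_secondPrimitive (hf : ∀ x y, IntervalIntegrable f volume x y)
    (f_nonneg : ∀ x, 0 ≤ f x) (ha : 0 ≤ a) (le_f : ∀ x, a ≤ |x| → c ≤ f x) (z : ℝ) :
    c / 2 * max (|z| - a) 0 ^ 2 ≤ secondPrimitive f z := by
  rcases le_total 0 z with hz | hz
  · rw [abs_of_nonneg hz]
    exact mul_sq_max_sub_le_secondPrimitive hf f_nonneg ha
      (fun x hx => le_f x (hx.trans (le_abs_self x))) hz
  · rw [abs_of_nonpos hz, ← secondPrimitive_comp_neg]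
    refine mul_sq_max_sub_le_secondPrimitive (fun x y => ?_) (fun x => f_nonneg (-x)) ha
      (fun x hx => le_f (-x) ?_) (neg_nonneg.2 hz)
    · simpa only [neg_neg] using (IntervalIntegrable.iff_comp_neg (by simp)).1 (hf (-x) (-y))
    · rw [abs_neg]
      exact hx.trans (le_abs_self x)

end SecondPrimitive

section Truncation

/-- The truncation of `b` that freezes it at its boundary values outside `(-1 + δ, 1 - δ)`; it turns
the mobility `b` into `b_δ`. -/
noncomputable def truncate (b : ℝ → ℝ) (δ r : ℝ) : ℝ :=
  if r ≤ -1 + δ then b (-1 + δ) else if 1 - δ ≤ r then b (1 - δ) else b r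

variable {b : ℝ → ℝ} {δ κ M : ℝ}

lemma aestronglyMeasurable_truncate
    (hb : AEStronglyMeasurable b (volume.restrict (Icc (-1 + δ) (1 - δ)))) :
    AEStronglyMeasurable (truncate b δ) := by
  refine AEStronglyMeasurable.piecewise (s := Iic (-1 + δ)) measurableSet_Iic
    aestronglyMeasurable_const
    (AEStronglyMeasurable.piecewise (s := Ici (1 - δ)) measurableSet_Ici
      aestronglyMeasurable_const ?_)
  rw [Measure.restrict_restrict measurableSet_Ici.compl]
  refine hb.mono_set fun r hr => ?_
  simp only [compl_Ici, compl_Iic, mem_inter_iff, mem_Iio, mem_Ioi] at hr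
  exact ⟨hr.2.le, hr.1.le⟩

lemma le_truncate (hδ : δ ≤ 1) (le_b : ∀ r ∈ Icc (-1 + δ) (1 - δ), κ ≤ b r) (r : ℝ) :
    κ ≤ truncate b δ r := by
  unfold truncate
  split_ifs with hleft hright
  · exact le_b _ ⟨le_rfl, by linarith⟩
  · exact le_b _ ⟨by linarith, le_rfl⟩
  · exact le_b r ⟨by linarith, by linarith⟩

lemma truncate_le (hleft : b (-1 + δ) ≤ M) (hright : b (1 - δ) ≤ M) {r : ℝ} (hr : 1 - δ ≤ |r|) :
    truncate b δ r ≤ M := by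
  unfold truncate
  split_ifs with hr_left hr_right
  · exact hleft
  · exact hright
  · rcases le_abs.1 hr with h | h <;> linarith

lemma intervalIntegrable_one_div_truncate (hδ : δ ≤ 1)
    (hb : AEStronglyMeasurable b (volume.restrict (Icc (-1 + δ) (1 - δ)))) (hκ : 0 < κ)
    (le_b : ∀ r ∈ Icc (-1 + δ) (1 - δ), κ ≤ b r) (x y : ℝ) :
    IntervalIntegrable (fun τ => 1 / truncate b δ τ) volume x y := by
  refine (intervalIntegrable_const (c := 1 / κ)).mono_fun'
    ((aestronglyMeasurable_truncate hb).aemeasurable.const_div 1).aestronglyMeasurable.restrict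
    (.of_forall fun τ => ?_)
  have hκτ : κ ≤ truncate b δ τ := le_truncate hδ le_b τ
  exact (Real.norm_of_nonneg (one_div_nonneg.2 (hκ.le.trans hκτ))).trans_le
    (one_div_le_one_div_of_le hκ hκτ)

lemma sq_max_abs_sub_le_secondPrimitive_one_div_truncate (hδ : δ ≤ 1)
    (hb : AEStronglyMeasurable b (volume.restrict (Icc (-1 + δ) (1 - δ)))) (hκ : 0 < κ)
    (le_b : ∀ r ∈ Icc (-1 + δ) (1 - δ), κ ≤ b r)
    (hleft : b (-1 + δ) ≤ M) (hright : b (1 - δ) ≤ M) (z : ℝ) :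
    max (|z| - (1 - δ)) 0 ^ 2 ≤ 2 * M * secondPrimitive (fun τ => 1 / truncate b δ τ) z := by
  have truncate_pos (τ : ℝ) : 0 < truncate b δ τ := hκ.trans_le (le_truncate hδ le_b τ)
  have hM : 0 < M := (hκ.trans_le (le_b _ ⟨by linarith, le_rfl⟩)).trans_le hright
  calc max (|z| - (1 - δ)) 0 ^ 2 = 2 * M * (1 / M / 2 * max (|z| - (1 - δ)) 0 ^ 2) := by
        field_simp
    _ ≤ _ := by
        gcongr
        exact mul_sq_max_abs_sub_le_secondPrimitive
          (intervalIntegrable_one_div_truncate hδ hb hκ le_b)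
          (fun τ => (one_div_pos.2 (truncate_pos τ)).le) (sub_nonneg.2 hδ)
          (fun τ hτ => one_div_le_one_div_of_le (truncate_pos τ) (truncate_le hleft hright hτ)) z

end Truncation

section Mobility

/-- The mobility `b` of the profile `B`, extended by zero beyond the pure phases `±1`. -/
noncomputable def mobility (m : ℝ) (B : ℝ → ℝ) (r : ℝ) : ℝ :=
  if r ∈ Icc (-1 : ℝ) 1 then (1 - r ^ 2) ^ m * B r else 0

variable {m δ r Blo Bhi : ℝ} {B : ℝ → ℝ}

lemma aestronglyMeasurable_mobility (m : ℝ)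
    (hB : AEStronglyMeasurable B (volume.restrict (Icc (-1) 1))) :
    AEStronglyMeasurable (mobility m B) := by
  refine AEStronglyMeasurable.piecewise (s := Icc (-1) 1) measurableSet_Icc ?_
    aestronglyMeasurable_const
  have : Measurable fun r : ℝ => (1 - r ^ 2) ^ m := by fun_prop
  exact this.aestronglyMeasurable.mul hB

lemma mobility_of_abs_le (hr : |r| ≤ 1) :
    mobility m B r = ((1 - |r|) * (1 + |r|)) ^ m * B r := by
  rw [mobility, if_pos (mem_Icc.2 (abs_le.1 hr)), ← sq_abs]
  ring_nf

lemma rpow_mul_le_mobility (hm : 0 ≤ m) (hδ : 0 ≤ δ) (hr : |r| ≤ 1 - δ) (hBlo : 0 ≤ Blo)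
    (hB : Blo ≤ B r) : δ ^ m * Blo ≤ mobility m B r := by
  rw [mobility_of_abs_le (by linarith)]
  have hbase : δ ≤ (1 - |r|) * (1 + |r|) := by nlinarith [abs_nonneg r]
  have hbase_nonneg : 0 ≤ (1 - |r|) * (1 + |r|) := hδ.trans hbase
  gcongr

lemma mobility_le_rpow_mul (hm : 0 ≤ m) (hδr : 1 - δ ≤ |r|) (hr : |r| ≤ 1) (hB_nonneg : 0 ≤ B r)
    (hB : B r ≤ Bhi) : mobility m B r ≤ (2 * δ) ^ m * Bhi := by
  rw [mobility_of_abs_le hr]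
  have hbase : (1 - |r|) * (1 + |r|) ≤ 2 * δ := by nlinarith
  have hbase_nonneg : 0 ≤ (1 - |r|) * (1 + |r|) :=
    mul_nonneg (sub_nonneg.2 hr) (by positivity)
  gcongr
  exact Real.rpow_nonneg (hbase_nonneg.trans hbase) m

end Mobility

theorem entropy_controls_deviation_general {m Blo Bhi δ : ℝ} {B : ℝ → ℝ} (hm : 0 ≤ m)
    (hB : AEStronglyMeasurable B (volume.restrict (Icc (-1) 1))) (hBlo : 0 < Blo)
    (hBbound : ∀ r ∈ Icc (-1 : ℝ) 1, Blo ≤ B r ∧ B r ≤ Bhi) (hδ : δ ∈ Ioc (0 : ℝ) 1) (z : ℝ) :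
    max (|z| - 1) 0 ^ 2 ≤ (2 : ℝ) ^ (m + 1) * δ ^ m * Bhi *
      secondPrimitive (fun τ => 1 / truncate (mobility m B) δ τ) z := by
  obtain ⟨hδ0, hδ1⟩ := hδ
  have mobility_lower : ∀ r ∈ Icc (-1 + δ) (1 - δ), δ ^ m * Blo ≤ mobility m B r := fun r hr =>
    rpow_mul_le_mobility hm hδ0.le (abs_le.2 ⟨by linarith [hr.1], hr.2⟩) hBlo.le
      (hBbound r ⟨by linarith [hr.1], by linarith [hr.2]⟩).1
  have mobility_upper {r : ℝ} (hr : |r| = 1 - δ) : mobility m B r ≤ (2 * δ) ^ m * Bhi := by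
    have hr1 : |r| ≤ 1 := by linarith
    have hBr := hBbound r (abs_le.1 hr1)
    exact mobility_le_rpow_mul hm hr.ge hr1 (hBlo.le.trans hBr.1) hBr.2
  have abs_right : |1 - δ| = 1 - δ := abs_of_nonneg (by linarith)
  have abs_left : |-1 + δ| = 1 - δ := by rw [← abs_right, ← abs_neg]; ring_nf
  calc max (|z| - 1) 0 ^ 2 ≤ max (|z| - (1 - δ)) 0 ^ 2 := by gcongr; linarith
    _ ≤ 2 * ((2 * δ) ^ m * Bhi) * secondPrimitive (fun τ => 1 / truncate (mobility m B) δ τ) z :=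
        sq_max_abs_sub_le_secondPrimitive_one_div_truncate hδ1
          (aestronglyMeasurable_mobility m hB).restrict (by positivity) mobility_lower
          (mobility_upper abs_left) (mobility_upper abs_right) z
    _ = _ := by
        rw [Real.rpow_add_one two_ne_zero, Real.mul_rpow zero_le_two hδ0.le]
        ring

/-- For every `δ ∈ (0,1)` and every `z ∈ ℝ`, the approximate entropy function
`Φ_δ(z) = ∫₀^z ∫₀^s 1/b_δ(τ) dτ ds` controls the deviation from the physical interval `[−1,1]`:
`((|z|−1)₊)² ≤ 2^{m+1} δ^m B^* Φ_δ(z)`. -/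
theorem entropy_controls_deviation
    (m : ℝ) (hm : 1 ≤ m)
    (B : ℝ → ℝ) (Blo Bhi : ℝ)
    (hB : ContDiffOn ℝ 1 B (Set.Icc (-1) 1))
    (hBlo : 0 < Blo)
    (hBbound : ∀ r ∈ Set.Icc (-1 : ℝ) 1, Blo ≤ B r ∧ B r ≤ Bhi)
    (b : ℝ → ℝ)
    (hb : ∀ r : ℝ, b r = if r ∈ Set.Icc (-1 : ℝ) 1 then (1 - r ^ 2) ^ m * B r else 0)
    (δ : ℝ) (hδ : δ ∈ Set.Ioo (0 : ℝ) 1)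
    (bδ : ℝ → ℝ)
    (hbδ : ∀ r : ℝ, bδ r =
      if r ≤ -1 + δ then b (-1 + δ)
      else if 1 - δ ≤ r then b (1 - δ)
      else b r)
    (Φδ : ℝ → ℝ)
    (hΦδ : ∀ r : ℝ, Φδ r = ∫ s in (0 : ℝ)..r, ∫ τ in (0 : ℝ)..s, 1 / bδ τ)
    (z : ℝ) :
    max (|z| - 1) 0 ^ 2 ≤ (2 : ℝ) ^ (m + 1) * δ ^ m * Bhi * Φδ z := by
  obtain ⟨rfl, rfl⟩ : b = mobility m B ∧ bδ = truncate b δ := ⟨funext hb, funext hbδ⟩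
  exact hΦδ z ▸ entropy_controls_deviation_general (zero_le_one.trans hm)
    (hB.continuousOn.aestronglyMeasurable measurableSet_Icc) hBlo hBbound (Ioo_subset_Ioc_self hδ) z
end

section
/- Let d ≥ 1 and let A : ℝ^d → ℝ be continuously differentiable with |A'(p)| ≤ A₂|p| for all p ∈ ℝ^d (A₂ ≥ 0) and with A' strongly monotone, i.e. (A'(p) − A'(q))·(p − q) ≥ c_A|p − q|² for all p, q ∈ ℝ^d and some c_A > 0, where A' = ∇A. Let G : ℝ^d → ℝ^d be measurable, Q-periodic, and square-integrable over Q. Then for every h ≠ 0 and every j ∈ {1,…,d}, c_A ∫_Q |G(x+h e_j) − G(x)|² dx ≤ −∫_Q A'(G(x))·(G(x+h e_j) − 2G(x) + G(x−h e_j)) dx. -/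
open MeasureTheory
open scoped RealInnerProductSpace

/-!
Strong monotonicity bounds the left-hand side by the integral of
`⟪F (G (x + v)) - F (G x), G (x + v) - G x⟫` with `F = ∇A` and `v = h eⱼ`. As `Q` and its translate
`v + Q` are fundamental domains of the same lattice, the integral over `Q` of a periodic function
does not change when its argument is shifted by `v`; shifting the term `F (G (x + v))` back to
`F (G x)` is a discrete integration by parts, and turns the product of first differences into minus
a second difference.
-/

open Function Set
open scoped ENNReal Pointwise

section FundamentalDomain

theorem memLp_restrict_iff_of_isAddFundamentalDomain {Γ α X : Type*} [AddGroup Γ] [AddAction Γ α]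
    [MeasurableSpace α] [MeasurableConstVAdd Γ α] [Countable Γ] {μ : Measure α}
    [VAddInvariantMeasure Γ α μ] [NormedAddCommGroup X] {s t : Set α}
    (hs : IsAddFundamentalDomain Γ s μ) (ht : IsAddFundamentalDomain Γ t μ) {f : α → X}
    (hf : ∀ (g : Γ) x, f (g +ᵥ x) = f x) (p : ℝ≥0∞) :
    MemLp f p (μ.restrict s) ↔ MemLp f p (μ.restrict t) := by
  refine and_congr (hs.aestronglyMeasurable_on_iff ht hf) ?_
  suffices eLpNorm f p (μ.restrict s) = eLpNorm f p (μ.restrict t) by rw [this]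
  have henorm (g : Γ) (x : α) : ‖f (g +ᵥ x)‖ₑ = ‖f x‖ₑ := by rw [hf]
  rcases eq_or_ne p 0 with rfl | hp₀
  · simp only [eLpNorm_exponent_zero]
  rcases eq_or_ne p ∞ with rfl | hp
  · simp only [eLpNorm_exponent_top, eLpNormEssSup,
      hs.essSup_measure_restrict (f := fun x => ‖f x‖ₑ) henorm,
      ht.essSup_measure_restrict (f := fun x => ‖f x‖ₑ) henorm]
  · simp only [eLpNorm_eq_lintegral_rpow_enorm_toReal hp₀ hp]
    rw [hs.setLIntegral_eq ht _ fun g x => by rw [henorm]]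

theorem isAddFundamentalDomain_congr {Γ α : Type*} [AddGroup Γ] [AddAction Γ α]
    [MeasurableSpace α] [MeasurableConstVAdd Γ α] [Countable Γ] {μ : Measure α}
    [VAddInvariantMeasure Γ α μ] {s t : Set α}
    (hs : IsAddFundamentalDomain Γ s μ) (hst : s =ᵐ[μ] t) :
    IsAddFundamentalDomain Γ t μ where
  nullMeasurableSet := hs.nullMeasurableSet.congr hst
  ae_covers := by
    have hmem : ∀ᵐ x ∂μ, ∀ g : Γ, g +ᵥ x ∈ s ↔ g +ᵥ x ∈ t :=
      ae_all_iff.2 fun g =>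
        (measurePreserving_vadd g μ).quasiMeasurePreserving.ae hst.mem_iff
    filter_upwards [hs.ae_covers, hmem] with x ⟨g, hg⟩ hx
    exact ⟨g, (hx g).1 hg⟩
  aedisjoint _ _ hg :=
    (hs.aedisjoint hg).congr ((vadd_set_ae_eq _).2 hst).symm ((vadd_set_ae_eq _).2 hst).symm

end FundamentalDomain

section Translation

theorem vadd_eq_of_periodic {E X : Type*} [AddCommGroup E] {L : AddSubgroup E} {f : E → X}
    (hf : ∀ c ∈ L, Periodic f c) (c : L) (x : E) : f (c +ᵥ x) = f x := by
  rw [AddSubgroup.vadd_def, vadd_eq_add, add_comm, hf c c.2]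

variable {E X : Type*} [AddCommGroup E] [MeasurableSpace E] [MeasurableAdd E] {μ : Measure E}
  [μ.IsAddLeftInvariant] {L : AddSubgroup E} [Countable L] {s : Set E} [NormedAddCommGroup X]

theorem measurePreserving_add_right_restrict_vadd (v : E) (s : Set E) :
    MeasurePreserving (· + v) (μ.restrict s) (μ.restrict (v +ᵥ s)) := by
  have hpre : (· + v) ⁻¹' (v +ᵥ s) = s := by
    ext x
    rw [mem_preimage, add_comm, ← vadd_eq_add, vadd_mem_vadd_set_iff]
  simpa only [hpre] using (measurePreserving_add_right μ v).restrict_preimage_emb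
    (measurableEmbedding_addRight v) (v +ᵥ s)

variable (hs : IsAddFundamentalDomain L s μ)
include hs

theorem memLp_comp_add_right_of_periodic {f : E → X} {p : ℝ≥0∞} (hf : ∀ c ∈ L, Periodic f c)
    (hfs : MemLp f p (μ.restrict s)) (v : E) :
    MemLp (fun x => f (x + v)) p (μ.restrict s) :=
  have hfvs : MemLp f p (μ.restrict (v +ᵥ s)) :=
    (memLp_restrict_iff_of_isAddFundamentalDomain hs (hs.vadd_of_comm v)
      (vadd_eq_of_periodic hf) p).1 hfs
  hfvs.comp_measurePreserving (measurePreserving_add_right_restrict_vadd v s)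

theorem setIntegral_comp_add_right_of_periodic [NormedSpace ℝ X] {f : E → X}
    (hf : ∀ c ∈ L, Periodic f c) (v : E) :
    ∫ x in s, f (x + v) ∂μ = ∫ x in s, f x ∂μ :=
  ((measurePreserving_add_right_restrict_vadd v s).integral_comp
    (measurableEmbedding_addRight v) f).trans
    ((hs.vadd_of_comm v).setIntegral_eq hs (vadd_eq_of_periodic hf))

end Translation

section InnerProduct

theorem integrable_inner_of_memLp_two {α H : Type*} [MeasurableSpace α] {μ : Measure α}
    [NormedAddCommGroup H] [InnerProductSpace ℝ H] {f g : α → H}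
    (hf : MemLp f 2 μ) (hg : MemLp g 2 μ) : Integrable (fun x => ⟪f x, g x⟫) μ :=
  (hf.norm.integrable_mul hg.norm).mono' (hf.1.inner hg.1)
    (.of_forall fun x => norm_inner_le_norm (f x) (g x))

theorem continuous_gradient {H : Type*} [NormedAddCommGroup H] [InnerProductSpace ℝ H]
    [CompleteSpace H] {A : H → ℝ} (hA : ContDiff ℝ 1 A) : Continuous (gradient A) :=
  (InnerProductSpace.toDual ℝ H).symm.continuous.comp (hA.continuous_fderiv one_ne_zero)

variable {E H : Type*} [AddCommGroup E] [MeasurableSpace E] [MeasurableAdd E] {μ : Measure E}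
  [μ.IsAddLeftInvariant] {L : AddSubgroup E} [Countable L] {s : Set E}
  [NormedAddCommGroup H] [InnerProductSpace ℝ H]

theorem setIntegral_inner_sub_sub_eq_neg_of_periodic (hs : IsAddFundamentalDomain L s μ)
    {Φ G : E → H} (hΦper : ∀ c ∈ L, Periodic Φ c) (hGper : ∀ c ∈ L, Periodic G c)
    (hΦ : MemLp Φ 2 (μ.restrict s)) (hG : MemLp G 2 (μ.restrict s)) (v : E) :
    ∫ x in s, ⟪Φ (x + v) - Φ x, G (x + v) - G x⟫ ∂μ
      = - ∫ x in s, ⟪Φ x, G (x + v) - (2 : ℝ) • G x + G (x - v)⟫ ∂μ := by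
  let D : E → ℝ := fun x => ⟪Φ x, G x - G (x - v)⟫
  have hDper : ∀ c ∈ L, Periodic D c := fun c hc x => by
    simp only [D, hΦper c hc x, hGper c hc x, (hGper c hc).sub_const v x]
  have hGadd := memLp_comp_add_right_of_periodic hs hGper hG v
  have hGsub : MemLp (fun x => G (x - v)) 2 (μ.restrict s) := by
    simpa only [sub_eq_add_neg] using memLp_comp_add_right_of_periodic hs hGper hG (-v)
  have hD : Integrable D (μ.restrict s) := integrable_inner_of_memLp_two hΦ (hG.sub hGsub)
  have hDadd : Integrable (fun x => D (x + v)) (μ.restrict s) :=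
    memLp_one_iff_integrable.1
      (memLp_comp_add_right_of_periodic hs hDper (memLp_one_iff_integrable.2 hD) v)
  have hforward : Integrable (fun x => ⟪Φ x, G (x + v) - G x⟫) (μ.restrict s) :=
    integrable_inner_of_memLp_two hΦ (hGadd.sub hG)
  calc ∫ x in s, ⟪Φ (x + v) - Φ x, G (x + v) - G x⟫ ∂μ
      = ∫ x in s, (D (x + v) - ⟪Φ x, G (x + v) - G x⟫) ∂μ := by
        simp only [D, add_sub_cancel_right, inner_sub_left]
    _ = ∫ x in s, (D x - ⟪Φ x, G (x + v) - G x⟫) ∂μ := by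
        rw [integral_sub hDadd hforward, integral_sub hD hforward,
          setIntegral_comp_add_right_of_periodic hs hDper]
    _ = - ∫ x in s, ⟪Φ x, G (x + v) - (2 : ℝ) • G x + G (x - v)⟫ ∂μ := by
        rw [← integral_neg]
        congr with x
        simp only [D, two_smul, inner_sub_right, inner_add_right]
        ring

theorem periodic_difference_quotient_estimate_general (hs : IsAddFundamentalDomain L s μ)
    [MeasurableSpace H] [BorelSpace H]
    {F : H → H} (hF : StronglyMeasurable F) {K : ℝ} (hgrow : ∀ p, ‖F p‖ ≤ K * ‖p‖)
    {cA : ℝ} (hmono : ∀ p q, cA * ‖p - q‖ ^ 2 ≤ ⟪F p - F q, p - q⟫)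
    {G : E → H} (hGper : ∀ c ∈ L, Periodic G c) (hG : MemLp G 2 (μ.restrict s)) (v : E) :
    cA * ∫ x in s, ‖G (x + v) - G x‖ ^ 2 ∂μ
      ≤ - ∫ x in s, ⟪F (G x), G (x + v) - (2 : ℝ) • G x + G (x - v)⟫ ∂μ := by
  have hFGper : ∀ c ∈ L, Periodic (F ∘ G) c := fun c hc => (hGper c hc).comp F
  have hFG : MemLp (F ∘ G) 2 (μ.restrict s) :=
    hG.of_le_mul
      (hF.aestronglyMeasurable.comp_aemeasurable hG.1.aemeasurable)
      (.of_forall fun x => hgrow (G x))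
  have hGdiff := (memLp_comp_add_right_of_periodic hs hGper hG v).sub hG
  have hFGdiff := (memLp_comp_add_right_of_periodic hs hFGper hFG v).sub hFG
  calc cA * ∫ x in s, ‖G (x + v) - G x‖ ^ 2 ∂μ
      = ∫ x in s, cA * ‖G (x + v) - G x‖ ^ 2 ∂μ := (integral_const_mul _ _).symm
    _ ≤ ∫ x in s, ⟪F (G (x + v)) - F (G x), G (x + v) - G x⟫ ∂μ :=
        integral_mono ((hGdiff.integrable_norm_pow two_ne_zero).const_mul cA)
          (integrable_inner_of_memLp_two hFGdiff hGdiff) fun x => hmono (G (x + v)) (G x)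
    _ = _ := setIntegral_inner_sub_sub_eq_neg_of_periodic hs hFGper hGper hFG hG v

end InnerProduct

section Box

/-- The lattice generated by the vectors `w i • eᵢ`: a function is periodic with respect to a box
with side lengths `w` exactly when every element of this lattice is one of its periods. -/
def boxLattice {ι : Type*} [DecidableEq ι] (w : ι → ℝ) : AddSubgroup (EuclideanSpace ℝ ι) :=
  (Submodule.span ℤ (range fun i => w i • EuclideanSpace.single i (1 : ℝ))).toAddSubgroup

instance {ι : Type*} [DecidableEq ι] [Finite ι] (w : ι → ℝ) : Countable (boxLattice w) :=
  inferInstanceAs <| Countable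
    (Submodule.span ℤ (range fun i => w i • EuclideanSpace.single i (1 : ℝ)))

theorem periodic_of_mem_boxLattice {ι X : Type*} [DecidableEq ι] {w : ι → ℝ}
    {f : EuclideanSpace ℝ ι → X} (hf : ∀ i, Periodic f (w i • EuclideanSpace.single i (1 : ℝ)))
    (p : EuclideanSpace ℝ ι) (hp : p ∈ boxLattice w) : Periodic f p := by
  induction hp using Submodule.span_induction with
  | mem _ hx => obtain ⟨i, rfl⟩ := hx; exact hf i
  | zero => exact periodic_with_period_zero f
  | add _ _ _ _ hx hy => exact hx.add_period hy
  | smul n _ _ hx => exact hx.zsmul n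

variable {ι : Type*} [Fintype ι]

theorem halfOpenBox_ae_eq_openBox (a c : ι → ℝ) :
    {x : EuclideanSpace ℝ ι | ∀ i, x i ∈ Ico (a i) (c i)}
      =ᵐ[volume] {x : EuclideanSpace ℝ ι | ∀ i, x i ∈ Ioo (a i) (c i)} := by
  have hpi : (univ.pi fun i => Ico (a i) (c i)) =ᵐ[volume] univ.pi fun i => Ioo (a i) (c i) :=
    Measure.univ_pi_Ico_ae_eq_Icc.trans Measure.univ_pi_Ioo_ae_eq_Icc.symm
  simpa only [Set.pi, mem_univ, true_implies, preimage_ofPred_eq] using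
    (PiLp.volume_preserving_ofLp ι).quasiMeasurePreserving.preimage_ae_eq hpi

theorem isAddFundamentalDomain_halfOpenBox [DecidableEq ι] {a c : ι → ℝ} (hac : ∀ i, a i < c i) :
    IsAddFundamentalDomain (boxLattice fun i => c i - a i)
      {x : EuclideanSpace ℝ ι | ∀ i, x i ∈ Ico (a i) (c i)} := by
  have hside (i : ι) : 0 < c i - a i := sub_pos.2 (hac i)
  let b := (EuclideanSpace.basisFun ι ℝ).toBasis.isUnitSMul fun i => (hside i).ne'.isUnit
  have hb : ⇑b = fun i => (c i - a i) • EuclideanSpace.single i (1 : ℝ) := by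
    funext i
    simp only [b, Module.Basis.isUnitSMul_apply, OrthonormalBasis.coe_toBasis,
      EuclideanSpace.basisFun_apply]
  have hrepr (x : EuclideanSpace ℝ ι) (i : ι) : b.repr x i = x i / (c i - a i) := by
    simp [b, Module.Basis.repr_isUnitSMul, Units.smul_def, div_eq_inv_mul]
  have hbox : WithLp.toLp 2 a +ᵥ ZSpan.fundamentalDomain b
      = {x : EuclideanSpace ℝ ι | ∀ i, x i ∈ Ico (a i) (c i)} := by
    ext x
    simp only [mem_vadd_set_iff_neg_vadd_mem, ZSpan.mem_fundamentalDomain, hrepr, mem_Ico,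
      le_div_iff₀ (hside _), div_lt_iff₀ (hside _)]
    simp
  have hdomain := (ZSpan.isAddFundamentalDomain' b volume).vadd_of_comm (WithLp.toLp 2 a)
  rwa [hbox, hb] at hdomain

theorem isAddFundamentalDomain_openBox [DecidableEq ι] {a c : ι → ℝ} (hac : ∀ i, a i < c i) :
    IsAddFundamentalDomain (boxLattice fun i => c i - a i)
      {x : EuclideanSpace ℝ ι | ∀ i, x i ∈ Ioo (a i) (c i)} :=
  isAddFundamentalDomain_congr (isAddFundamentalDomain_halfOpenBox hac)
    (halfOpenBox_ae_eq_openBox a c)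

end Box

/-- Let `A : ℝ^d → ℝ` be `C¹` with linear growth and strongly monotone
gradient `A' = ∇A`, and let `G : ℝ^d → ℝ^d` be measurable, `Q`-periodic and square-integrable
over the box `Q`. Then for every `h ≠ 0` and every coordinate direction `j`,
`c_A ∫_Q |G(x+h eⱼ) − G(x)|² dx ≤ −∫_Q A'(G(x))·(G(x+h eⱼ) − 2G(x) + G(x−h eⱼ)) dx`. -/
theorem periodic_difference_quotient_estimate
    (d : ℕ) (hd : 1 ≤ d)
    (A : EuclideanSpace ℝ (Fin d) → ℝ)
    (hA : ContDiff ℝ 1 A)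
    (A₂ : ℝ) (hA₂ : 0 ≤ A₂)
    (hgrow : ∀ p : EuclideanSpace ℝ (Fin d), ‖gradient A p‖ ≤ A₂ * ‖p‖)
    (cA : ℝ) (hcA : 0 < cA)
    (hmono : ∀ p q : EuclideanSpace ℝ (Fin d),
        cA * ‖p - q‖ ^ 2 ≤ ⟪gradient A p - gradient A q, p - q⟫)
    (a c : Fin d → ℝ) (hac : ∀ i, a i < c i)
    (Q : Set (EuclideanSpace ℝ (Fin d)))
    (hQ : Q = {x : EuclideanSpace ℝ (Fin d) | ∀ i, x i ∈ Set.Ioo (a i) (c i)})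
    (G : EuclideanSpace ℝ (Fin d) → EuclideanSpace ℝ (Fin d))
    (hGmeas : Measurable G)
    (hGper : ∀ (x : EuclideanSpace ℝ (Fin d)) (i : Fin d),
        G (x + (c i - a i) • EuclideanSpace.single i (1 : ℝ)) = G x)
    (hGL2 : IntegrableOn (fun x => ‖G x‖ ^ 2) Q volume)
    (h : ℝ) (hh : h ≠ 0) (j : Fin d) :
    cA * ∫ x in Q, ‖G (x + h • EuclideanSpace.single j (1 : ℝ)) - G x‖ ^ 2
      ≤ - ∫ x in Q,
          ⟪gradient A (G x),
            G (x + h • EuclideanSpace.single j (1 : ℝ)) - (2 : ℝ) • G x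
              + G (x - h • EuclideanSpace.single j (1 : ℝ))⟫ := by
  subst hQ
  exact periodic_difference_quotient_estimate_general (isAddFundamentalDomain_openBox hac)
    (continuous_gradient hA).stronglyMeasurable hgrow hmono
    (periodic_of_mem_boxLattice fun i x => hGper x i)
    ((memLp_two_iff_integrable_sq_norm hGmeas.aestronglyMeasurable).2 hGL2) _
end
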